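/- Let L be a field and σ an automorphism of L, with fixed field F = {x ∈ L : σ(x) = x}. Let r ≥ 0 be an integer strictly smaller than the order of σ in Aut(L), and let a_0,…,a_{r−1} ∈ L. Then V = {x ∈ L : σ^r(x) + Σ_{i=0}^{r−1} a_i σ^i(x) = 0} is an F-subspace of L of dimension at most r. -/

import Mathlib

open scoped Classical
noncomputable section

/-!
Elements `x₀, …, xₙ₋₁` that are linearly independent over the fixed field of `σ` have an invertible
Casorati matrix `(σⁱ xⱼ)`. To see this, normalize a shortest relation `∑ⱼ cⱼ σⁱ(xⱼ) = 0` (for all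
`i < n`) so that one coefficient is `1`. Applying `σ` and subtracting kills this coefficient, so by
minimality every `σ(cⱼ) - cⱼ` vanishes; the row `i = 0` is then a relation over the fixed field.
On the other hand, `r + 1` solutions of `∑_{i ≤ r} aᵢ σⁱ(x) = 0` make `(a₀, …, aᵣ)` a left null
vector of their Casorati matrix, hence cannot be independent unless every `aᵢ` is zero.
-/

/-- The Casorati matrix `(σⁱ xⱼ)`, the analogue of the Wronskian matrix for the operator `σ`. -/
def casoratiMatrix {R : Type*} [Semiring R] {n : ℕ} (σ : R →+* R) (x : Fin n → R) :
    Matrix (Fin n) (Fin n) R :=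
  Matrix.of fun i j => σ^[i] (x j)

theorem sum_map_sub_mul_iterate_eq_zero {R ι : Type*} [Ring R] {σ : R →+* R} {x c : ι → R}
    {s : Finset ι} {i : ℕ} (hi : ∑ j ∈ s, c j * σ^[i] (x j) = 0)
    (hi_succ : ∑ j ∈ s, c j * σ^[i + 1] (x j) = 0) :
    ∑ j ∈ s, (σ (c j) - c j) * σ^[i] (σ (x j)) = 0 := by
  have hσ : ∑ j ∈ s, σ (c j) * σ^[i + 1] (x j) = 0 := by
    simpa only [map_sum, map_mul, map_zero, ← Function.iterate_succ_apply'] using congrArg σ hi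
  simp only [sub_mul, Finset.sum_sub_distrib, ← Function.iterate_succ_apply, hσ, hi_succ, sub_zero]

section DivisionRing

variable {L ι : Type*} [DivisionRing L]

/-- The fixed field `{x | σ x = x}` of an endomorphism `σ` of a division ring. -/
def fixedSubfield (σ : L →+* L) : Subfield L :=
  σ.eqLocusField (RingHom.id L)

/-- An endomorphism `σ`, regarded as a linear map over its fixed field. -/
def fixedSubfieldLinearMap (σ : L →+* L) : L →ₗ[fixedSubfield σ] L where
  toFun := σ
  map_add' := map_add σ
  map_smul' c x := by
    have hc : σ c = c := c.2
    simp only [Subfield.smul_def, smul_eq_mul, map_mul, hc, RingHom.id_apply]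

variable {σ : L →+* L}

theorem linearIndependent_fixedSubfield_map {x : ι → L}
    (hx : LinearIndependent (fixedSubfield σ) x) :
    LinearIndependent (fixedSubfield σ) fun j => σ (x j) :=
  hx.map' (fixedSubfieldLinearMap σ) (LinearMap.ker_eq_bot.2 σ.injective)

theorem eq_zero_of_sum_fixed_mul_eq_zero {x : ι → L}
    (hx : LinearIndependent (fixedSubfield σ) x) {s : Finset ι} {c : ι → L}
    (hc : ∀ j ∈ s, σ (c j) = c j) (hsum : ∑ j ∈ s, c j * x j = 0) :
    ∀ j ∈ s, c j = 0 := by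
  have lift_c : ∀ j ∈ s, ∃ f : fixedSubfield σ, (f : L) = c j := fun j hj => ⟨⟨c j, hc j hj⟩, rfl⟩
  choose! f hf using lift_c
  have hf_sum : ∑ j ∈ s, f j • x j = 0 := by
    rw [← hsum]
    exact Finset.sum_congr rfl fun j hj => by rw [Subfield.smul_def, smul_eq_mul, hf j hj]
  intro j hj
  rw [← hf j hj, linearIndependent_iff'.1 hx s f hf_sum j hj, ZeroMemClass.coe_zero]

theorem eq_zero_of_sum_mul_iterate_eq_zero {x : ι → L}
    (hx : LinearIndependent (fixedSubfield σ) x) {s : Finset ι} {c : ι → L}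
    (h : ∀ i < s.card, ∑ j ∈ s, c j * σ^[i] (x j) = 0) :
    ∀ j ∈ s, c j = 0 := by
  induction s using Finset.induction_on generalizing x c with
  | empty => simp
  | insert k s hk ih =>
    rw [Finset.card_insert_of_notMem hk] at h
    by_contra! hne
    have hck : c k ≠ 0 := by
      intro hck
      have hs : ∀ j ∈ s, c j = 0 := ih hx fun i hi => by
        simpa [Finset.sum_insert hk, hck] using h i (hi.trans (Nat.lt_succ_self _))
      obtain ⟨j, hj, hcj⟩ := hne
      rcases Finset.mem_insert.1 hj with rfl | hj
      exacts [hcj hck, hcj (hs j hj)]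
    let d : ι → L := fun j => (c k)⁻¹ * c j
    have hdk : d k = 1 := inv_mul_cancel₀ hck
    have hd : ∀ i < s.card + 1, ∑ j ∈ insert k s, d j * σ^[i] (x j) = 0 := fun i hi => by
      simp only [d, mul_assoc, ← Finset.mul_sum, h i hi, mul_zero]
    have hdiff : ∀ j ∈ s, σ (d j) - d j = 0 :=
      ih (linearIndependent_fixedSubfield_map hx) fun i hi => by
        simpa [Finset.sum_insert hk, hdk] using sum_map_sub_mul_iterate_eq_zero
          (hd i (hi.trans (Nat.lt_succ_self _))) (hd (i + 1) (Nat.succ_lt_succ hi))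
    have hfixed : ∀ j ∈ insert k s, σ (d j) = d j :=
      Finset.forall_mem_insert .. |>.2
        ⟨by rw [hdk, map_one], fun j hj => sub_eq_zero.1 (hdiff j hj)⟩
    have hdk_zero : d k = 0 := eq_zero_of_sum_fixed_mul_eq_zero hx hfixed
      (hd 0 s.card.succ_pos) k (Finset.mem_insert_self k s)
    exact one_ne_zero (hdk.symm.trans hdk_zero)

end DivisionRing

section Field

variable {L : Type*} [Field L] {n r : ℕ}

theorem det_casoratiMatrix_ne_zero {σ : L →+* L} {x : Fin n → L}
    (hx : LinearIndependent (fixedSubfield σ) x) : (casoratiMatrix σ x).det ≠ 0 := by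
  intro hdet
  obtain ⟨c, hc_ne, hc⟩ := Matrix.exists_mulVec_eq_zero_iff.2 hdet
  have hrow : ∀ i < (Finset.univ : Finset (Fin n)).card, ∑ j, c j * σ^[i] (x j) = 0 := by
    intro i hi
    rw [Finset.card_fin] at hi
    exact (Finset.sum_congr rfl fun j _ => mul_comm _ _).trans (congrFun hc ⟨i, hi⟩)
  exact hc_ne (funext fun j => eq_zero_of_sum_mul_iterate_eq_zero hx hrow j (Finset.mem_univ j))

/-- The linear difference operator `∑ᵢ aᵢ σⁱ`, as a linear map over the fixed field of `σ`. -/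
def differenceOperator (σ : L →+* L) (a : Fin n → L) : Module.End (fixedSubfield σ) L :=
  ∑ i, a i • fixedSubfieldLinearMap σ ^ (i : ℕ)

theorem differenceOperator_apply (σ : L →+* L) (a : Fin n → L) (x : L) :
    differenceOperator σ a x = ∑ i, a i * σ^[i] x := by
  simp only [differenceOperator, LinearMap.sum_apply, LinearMap.smul_apply, Module.End.pow_apply,
    smul_eq_mul]
  rfl

theorem vecMul_casoratiMatrix (σ : L →+* L) (a x : Fin n → L) :
    Matrix.vecMul a (casoratiMatrix σ x) = fun j => differenceOperator σ a (x j) :=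
  funext fun j => (differenceOperator_apply σ a (x j)).symm

theorem rank_ker_differenceOperator_le (σ : L →+* L) {a : Fin (r + 1) → L} (ha : a ≠ 0) :
    Module.rank (fixedSubfield σ) (LinearMap.ker (differenceOperator σ a)) ≤ r := by
  rw [← Cardinal.lt_natCast_add_one_iff, ← Nat.cast_add_one]
  by_contra! hle
  obtain ⟨x, hx⟩ := Module.le_rank_iff.1 hle
  have hx_coe : LinearIndependent (fixedSubfield σ) fun j => (x j : L) :=
    hx.map' (Submodule.subtype _) (Submodule.ker_subtype _)
  have hnull : Matrix.vecMul a (casoratiMatrix σ fun j => (x j : L)) = 0 := by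
    rw [vecMul_casoratiMatrix]
    exact funext fun j => (x j).2
  exact ha (Matrix.eq_zero_of_vecMul_eq_zero (det_casoratiMatrix_ne_zero hx_coe) hnull)

theorem semilinear_equation_solutions_dimension_le_general (σ : L →+* L) (a : Fin r → L) :
    ∃ Fsub : Subfield L, (Fsub : Set L) = {x : L | σ x = x} ∧
      ∃ V : Submodule Fsub L,
        (V : Set L) = {x : L | σ^[r] x + ∑ i : Fin r, a i * σ^[i] x = 0} ∧
        Module.rank Fsub V ≤ r := by
  let b : Fin (r + 1) → L := Fin.snoc a 1
  have hb : b ≠ 0 := fun h => by simpa [b] using congrFun h (Fin.last r)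
  have hb_apply (x : L) : differenceOperator σ b x = σ^[r] x + ∑ i : Fin r, a i * σ^[i] x := by
    simp [differenceOperator_apply, Fin.sum_univ_castSucc, b, add_comm]
  refine ⟨fixedSubfield σ, rfl, LinearMap.ker (differenceOperator σ b), ?_,
    rank_ker_differenceOperator_le σ hb⟩
  ext x
  simp only [SetLike.mem_coe, LinearMap.mem_ker, hb_apply, Set.mem_ofPred_eq]

end Field

/-- **Statement 6.** Let `L` be a field and `σ` an automorphism of `L`, with fixed field
`F = {x ∈ L : σ(x) = x}`.  Let `r ≥ 0` be an integer strictly smaller than the order of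
`σ` in `Aut(L)` (where infinite order is recorded as `orderOf σ = 0`), and let
`a₀,…,a_{r-1} ∈ L`.  Then `V = {x ∈ L : σ^r(x) + Σ_{i<r} aᵢ σ^i(x) = 0}` is an
`F`-subspace of `L` of dimension at most `r`. -/
theorem semilinear_equation_solutions_dimension_le
    (L : Type) [Field L] (σ : L ≃+* L) (r : ℕ)
    (hr : orderOf σ = 0 ∨ r < orderOf σ) (a : Fin r → L) :
    ∃ Fsub : Subfield L, (Fsub : Set L) = {x : L | σ x = x} ∧
      ∃ V : Submodule Fsub L,
        (V : Set L) = {x : L | (σ : L → L)^[r] x + ∑ i : Fin r, a i * (σ : L → L)^[i] x = 0} ∧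
        Module.rank Fsub V ≤ r :=
  semilinear_equation_solutions_dimension_le_general (σ : L →+* L) a
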